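/- arXiv:2505.00318 — 2 statements merged into one kernel-verified Lean document; each statement's English description precedes it below -/
import Mathlib

section
/- Let F : ℝ^d → ℝ be differentiable with L-Lipschitz gradient, let ω, g ∈ ℝ^d, let s > 0 satisfy s·L ≤ 1, and set ω' = ω − s·g. Then the inexact-gradient descent bound holds: F(ω') ≤ F(ω) − (s/2)·‖∇F(ω)‖² + (s/2)·‖g − ∇F(ω)‖². -/
/-- **Inexact-gradient descent bound.**
Let `F` be differentiable with `L`-Lipschitz gradient, let `s > 0` with
`s * L ≤ 1`, and set `ω' = ω - s • g`. Then
`F ω' ≤ F ω - (s/2) * ‖∇F ω‖² + (s/2) * ‖g - ∇F ω‖²`. -/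
theorem inexact_gradient_descent_bound
    (d : ℕ) (F : EuclideanSpace ℝ (Fin d) → ℝ) (L : ℝ)
    (hF : Differentiable ℝ F)
    (hLip : ∀ x y : EuclideanSpace ℝ (Fin d),
      ‖gradient F x - gradient F y‖ ≤ L * ‖x - y‖)
    (ω g ω' : EuclideanSpace ℝ (Fin d)) (s : ℝ)
    (hs : 0 < s) (hsL : s * L ≤ 1)
    (hω' : ω' = ω - s • g) :
    F ω' ≤ F ω - (s / 2) * ‖gradient F ω‖ ^ 2
      + (s / 2) * ‖g - gradient F ω‖ ^ 2 := by
  have hd : ∀ t : ℝ, HasDerivAt (fun t : ℝ => F (ω - t • g))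
      (-inner ℝ (gradient F (ω - t • g)) g) t := by
    intro t
    have h1 : HasDerivAt (fun t : ℝ => ω - t • g) (-g) t := by
      simpa using ((hasDerivAt_id t).smul_const g).const_sub ω
    have h2 := (hF (ω - t • g)).hasGradientAt.hasFDerivAt
    have h3 := h2.comp_hasDerivAt t h1
    simpa [Function.comp_def] using h3
  have hB : ∀ t : ℝ, HasDerivAt
      (fun t : ℝ => F ω - t * inner ℝ (gradient F ω) g + L * ‖g‖ ^ 2 / 2 * t ^ 2)
      (-inner ℝ (gradient F ω) g + L * ‖g‖ ^ 2 * t) t := by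
    intro t
    have h := (((hasDerivAt_id t).mul_const (inner ℝ (gradient F ω) g)).const_sub (F ω)).add
      (((hasDerivAt_id t).pow 2).const_mul (L * ‖g‖ ^ 2 / 2))
    refine h.congr_deriv ?_
    simp
    ring
  have key := image_le_of_deriv_right_le_deriv_boundary (a := 0) (b := s)
    (fun t _ => (hd t).continuousAt.continuousWithinAt)
    (fun t _ => (hd t).hasDerivWithinAt) (by simp)
    (fun t _ => (hB t).continuousAt.continuousWithinAt)
    (fun t _ => (hB t).hasDerivWithinAt)
    (fun t ht => by
      have h1 := hLip ω (ω - t • g)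
      have h2 := real_inner_le_norm (gradient F ω - gradient F (ω - t • g)) g
      rw [inner_sub_left] at h2
      rw [sub_sub_cancel, norm_smul, Real.norm_of_nonneg ht.1] at h1
      have h3 := mul_le_mul_of_nonneg_right h1 (norm_nonneg g)
      linarith) (Set.right_mem_Icc.2 hs.le)
  have h4 : s * (s * L) * ‖g‖ ^ 2 ≤ s * 1 * ‖g‖ ^ 2 := by gcongr
  rw [hω', norm_sub_sq_real, real_inner_comm]
  linarith
end

section
/- Consider one full FedEMA round starting from ω_EMA^{r−1}: each client c sets ω_c^{r,0} = ω_EMA^{r−1}, runs τ local steps ω_c^{r,t+1} = ω_c^{r,t} − η·(∇L_c(ω_c^{r,t}) − λ·∇H(ω_c^{r,t})), the server aggregates ω^r = Σ_c p_c·ω_c^{r,τ} and sets ω_EMA^r = β·ω_EMA^{r−1} + (1−β)·ω^r. Assume each ∇L_c is L-Lipschitz, ‖∇L_c(ω)‖ ≤ G and ‖∇H(ω)‖ ≤ γ for all c, ω, and that the effective step size s = η·(1−β)·τ satisfies s·L ≤ 1. Then the global loss L = Σ_c p_c·L_c decreases up to a drift-induced error: L(ω_EMA^r) ≤ L(ω_EMA^{r−1})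 − (s/2)·‖∇L(ω_EMA^{r−1})‖² + (s/2)·(λγ + L·η·τ·(G + λγ))². -/
theorem fedema_descent_aux {E : Type*} [NormedAddCommGroup E] [InnerProductSpace ℝ E]
    [CompleteSpace E] (f : E → ℝ) (hf : Differentiable ℝ f) (L : ℝ) (a δ : E)
    (hLip : ∀ x y : E, ‖gradient f x - gradient f y‖ ≤ L * ‖x - y‖) :
    f (a + δ) ≤ f a + inner ℝ (gradient f a) δ + L / 2 * ‖δ‖ ^ 2 := by
  have hφ : ∀ t : ℝ, HasDerivAt (fun t : ℝ => f (a + t • δ))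
      (inner ℝ (gradient f (a + t • δ)) δ) t := by
    intro t
    have h1 : HasFDerivAt f _ (a + t • δ) := (hf (a + t • δ)).hasGradientAt.hasFDerivAt
    have h2 : HasDerivAt (fun t : ℝ => a + t • δ) δ t := by
      simpa using ((hasDerivAt_id t).smul_const δ).const_add a
    have h3 := h1.comp_hasDerivAt t h2
    rw [InnerProductSpace.toDual_apply_apply] at h3
    exact h3
  have hB : ∀ t : ℝ, HasDerivAt
      (fun t : ℝ => f a + t * inner ℝ (gradient f a) δ + L / 2 * ‖δ‖ ^ 2 * t ^ 2)
      (inner ℝ (gradient f a) δ + L * ‖δ‖ ^ 2 * t) t := by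
    intro t
    have h := (((hasDerivAt_id t).mul_const (inner ℝ (gradient f a) δ)).const_add (f a)).add
      (((hasDerivAt_id t).pow 2).const_mul (L / 2 * ‖δ‖ ^ 2))
    have e : inner ℝ (gradient f a) δ + L * ‖δ‖ ^ 2 * t = 1 * inner ℝ (gradient f a) δ
        + L / 2 * ‖δ‖ ^ 2 * (((2 : ℕ) : ℝ) * id t ^ (2 - 1) * 1) := by
      simp; ring
    rw [e]
    exact h
  have key := image_le_of_deriv_right_le_deriv_boundary (a := 0) (b := 1)
    (f := fun t : ℝ => f (a + t • δ))
    (B := fun t : ℝ => f a + t * inner ℝ (gradient f a) δ + L / 2 * ‖δ‖ ^ 2 * t ^ 2)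
    (fun t _ => (hφ t).continuousAt.continuousWithinAt)
    (fun t _ => (hφ t).hasDerivWithinAt) (by simp)
    (fun t _ => (hB t).continuousAt.continuousWithinAt)
    (fun t _ => (hB t).hasDerivWithinAt)
    (by
      intro t ht
      have h1 := real_inner_le_norm (gradient f (a + t • δ) - gradient f a) δ
      rw [inner_sub_left] at h1
      have h2 := hLip (a + t • δ) a
      rw [add_sub_cancel_left, norm_smul, Real.norm_of_nonneg ht.1] at h2
      nlinarith [mul_le_mul_of_nonneg_right h2 (norm_nonneg δ)])
    (show (1 : ℝ) ∈ Set.Icc (0 : ℝ) 1 by simp)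
  simp only [one_smul, one_mul, one_pow, mul_one] at key
  exact key

/-- **Per-round descent of the global loss in FedEMA.**
One FedEMA round: each client `c` starts at `x c 0 = ωprev`, runs `τ` local steps
`x c (t+1) = x c t - η • (∇L_c (x c t) - λ • ∇H (x c t))`; the server aggregates
`ωr = ∑ c, p c • x c τ` and sets `ωnew = β • ωprev + (1-β) • ωr`. Under
`L`-Lipschitz client gradients, `‖∇L_c ω‖ ≤ G`, `‖∇H ω‖ ≤ γ`, and effective step
size `s = η * (1-β) * τ` with `s * L ≤ 1`, the global loss
`Lg = fun ω => ∑ c, p c * L_c ω` satisfies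
`Lg ωnew ≤ Lg ωprev - (s/2) * ‖∇Lg ωprev‖² + (s/2) * (λγ + L * η * τ * (G + λγ))²`. -/
theorem fedema_per_round_descent
    (d C : ℕ) (p : Fin C → ℝ) (hp : ∀ c, 0 ≤ p c) (hpsum : ∑ c, p c = 1)
    (Lc : Fin C → EuclideanSpace ℝ (Fin d) → ℝ)
    (H : EuclideanSpace ℝ (Fin d) → ℝ)
    (hdiff : ∀ c, Differentiable ℝ (Lc c)) (hH : Differentiable ℝ H)
    (L η lam β G γ : ℝ)
    (hLip : ∀ c, ∀ x y : EuclideanSpace ℝ (Fin d),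
      ‖gradient (Lc c) x - gradient (Lc c) y‖ ≤ L * ‖x - y‖)
    (hG : ∀ c, ∀ ω : EuclideanSpace ℝ (Fin d), ‖gradient (Lc c) ω‖ ≤ G)
    (hγ : ∀ ω : EuclideanSpace ℝ (Fin d), ‖gradient H ω‖ ≤ γ)
    (hη : 0 < η) (hlam : 0 ≤ lam) (hβ : β ∈ Set.Ioo (0 : ℝ) 1)
    (τ : ℕ) (hτ : 1 ≤ τ)
    (hsL : η * (1 - β) * τ * L ≤ 1)
    (ωprev ωr ωnew : EuclideanSpace ℝ (Fin d))
    (x : Fin C → ℕ → EuclideanSpace ℝ (Fin d))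
    (hx0 : ∀ c, x c 0 = ωprev)
    (hstep : ∀ c, ∀ t : ℕ,
      x c (t + 1) = x c t - η • (gradient (Lc c) (x c t) - lam • gradient H (x c t)))
    (hagg : ωr = ∑ c, p c • x c τ)
    (hema : ωnew = β • ωprev + (1 - β) • ωr) :
    (fun ω : EuclideanSpace ℝ (Fin d) => ∑ c, p c * Lc c ω) ωnew
      ≤ (fun ω : EuclideanSpace ℝ (Fin d) => ∑ c, p c * Lc c ω) ωprev
        - (η * (1 - β) * τ / 2) *
            ‖gradient (fun ω : EuclideanSpace ℝ (Fin d) => ∑ c, p c * Lc c ω) ωprev‖ ^ 2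
        + (η * (1 - β) * τ / 2) *
            (lam * γ + L * η * τ * (G + lam * γ)) ^ 2 := by
  by_cases hL : L < 0
  · have hsub : ∀ u v : EuclideanSpace ℝ (Fin d), u = v := by
      intro u v
      have h1 : 0 < C := by
        rcases Nat.eq_zero_or_pos C with h | h
        · subst h; simp at hpsum
        · exact h
      have h2 := (norm_nonneg _).trans (hLip ⟨0, h1⟩ u v)
      have h3 := norm_nonneg (u - v)
      have h4 : ‖u - v‖ = 0 := by nlinarith
      exact sub_eq_zero.mp (norm_eq_zero.mp h4)
    rw [hsub ωnew ωprev, hsub (gradient _ ωprev) 0]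
    have hs : 0 ≤ η * (1 - β) * τ / 2 := by
      have := hβ.2
      have : 0 ≤ 1 - β := by linarith
      positivity
    have := mul_nonneg hs (sq_nonneg (lam * γ + L * η * τ * (G + lam * γ)))
    simp only [norm_zero]
    linarith
  push Not at hL
  have hβ1 : 0 < 1 - β := by linarith [hβ.2]
  have hτ0 : (0 : ℝ) < τ := by exact_mod_cast hτ
  set s := η * (1 - β) * τ with hs
  have hs0 : 0 < s := by positivity
  set D := lam * γ + L * η * τ * (G + lam * γ) with hD
  have hγ0 : 0 ≤ γ := (norm_nonneg _).trans (hγ 0)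
  have hdrift : ∀ c, ∀ t : ℕ, ‖x c t - ωprev‖ ≤ η * t * (G + lam * γ) := by
    intro c t
    induction t with
    | zero => simp [hx0]
    | succ t ih =>
      have e : x c (t + 1) - ωprev = (x c t - ωprev)
          - η • (gradient (Lc c) (x c t) - lam • gradient H (x c t)) := by
        rw [hstep]; abel
      have h1 : ‖gradient (Lc c) (x c t) - lam • gradient H (x c t)‖ ≤ G + lam * γ := by
        refine (norm_sub_le _ _).trans (add_le_add (hG c _) ?_)
        rw [norm_smul, Real.norm_of_nonneg hlam]
        exact mul_le_mul_of_nonneg_left (hγ _) hlam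
      rw [e]
      refine (norm_sub_le _ _).trans ?_
      rw [norm_smul, Real.norm_of_nonneg hη.le]
      have h2 := mul_le_mul_of_nonneg_left h1 hη.le
      push_cast
      linarith
  have herr : ∀ c, ∀ t : ℕ, t ≤ τ →
      ‖x c t - ωprev + (η * t) • gradient (Lc c) ωprev‖ ≤ η * t * D := by
    intro c t
    induction t with
    | zero => simp [hx0]
    | succ t ih =>
      intro ht
      have ih := ih (by omega)
      have e : x c (t + 1) - ωprev + (η * ((t + 1 : ℕ) : ℝ)) • gradient (Lc c) ωprev
          = (x c t - ωprev + (η * t) • gradient (Lc c) ωprev)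
          - η • ((gradient (Lc c) (x c t) - gradient (Lc c) ωprev)
            - lam • gradient H (x c t)) := by
        rw [hstep]; push_cast; module
      have hGγ : 0 ≤ G + lam * γ := by
        have := (norm_nonneg _).trans (hG c 0)
        positivity
      have htτ : (t : ℝ) ≤ τ := by exact_mod_cast (by omega : t ≤ τ)
      have h1 : ‖(gradient (Lc c) (x c t) - gradient (Lc c) ωprev)
            - lam • gradient H (x c t)‖ ≤ D := by
        refine (norm_sub_le _ _).trans ?_
        rw [norm_smul, Real.norm_of_nonneg hlam]
        have a1 := mul_le_mul_of_nonneg_left (hγ (x c t)) hlam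
        have a2 := hLip c (x c t) ωprev
        have a3 := mul_le_mul_of_nonneg_left (hdrift c t) hL
        have a4 : L * (η * t * (G + lam * γ)) ≤ L * (η * τ * (G + lam * γ)) := by gcongr
        rw [hD]
        linarith
      rw [e]
      refine (norm_sub_le _ _).trans ?_
      rw [norm_smul, Real.norm_of_nonneg hη.le]
      have h2 := mul_le_mul_of_nonneg_left h1 hη.le
      push_cast
      linarith
  have hgrad : gradient (fun ω : EuclideanSpace ℝ (Fin d) => ∑ c, p c * Lc c ω) ωprev
      = ∑ c, p c • gradient (Lc c) ωprev := by
    apply HasGradientAt.gradient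
    rw [hasGradientAt_iff_hasFDerivAt, map_sum]
    have := HasFDerivAt.fun_sum (u := Finset.univ)
      (fun c _ => ((hdiff c ωprev).hasGradientAt.hasFDerivAt).const_mul (p c))
    have e : ∀ c, (InnerProductSpace.toDual ℝ (EuclideanSpace ℝ (Fin d)))
        (p c • gradient (Lc c) ωprev) = p c •
        (InnerProductSpace.toDual ℝ (EuclideanSpace ℝ (Fin d))) (gradient (Lc c) ωprev) := by
      intro c
      ext v
      simp [real_inner_smul_left]
    simp only [e]
    exact this
  rw [hgrad]
  set g := ∑ c, p c • gradient (Lc c) ωprev with hg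
  obtain ⟨δ, hδ⟩ : ∃ δ, ωnew = ωprev + δ := ⟨ωnew - ωprev, by abel⟩
  have hpw : ωprev = ∑ c, p c • ωprev := by rw [← Finset.sum_smul, hpsum, one_smul]
  have he : δ + s • g = (1 - β) •
      ∑ c, p c • (x c τ - ωprev + (η * τ) • gradient (Lc c) ωprev) := by
    have e1 : ∑ c, p c • (x c τ - ωprev + (η * τ) • gradient (Lc c) ωprev)
        = ωr - ωprev + (η * τ) • g := by
      simp only [smul_add, smul_sub, Finset.sum_add_distrib, Finset.sum_sub_distrib]
      rw [← hpw, ← hagg, hg, Finset.smul_sum]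
      congr 1
      exact Finset.sum_congr rfl fun c _ => smul_comm _ _ _
    have e2 : δ = ωnew - ωprev := by rw [hδ]; abel
    rw [e1, e2, hema, hs]
    module
  have hebd : ‖δ + s • g‖ ≤ s * D := by
    rw [he, norm_smul, Real.norm_of_nonneg hβ1.le]
    have h1 : ‖∑ c, p c • (x c τ - ωprev + (η * τ) • gradient (Lc c) ωprev)‖
        ≤ ∑ c, p c * (η * τ * D) := by
      refine norm_sum_le_of_le _ fun c _ => ?_
      rw [norm_smul, Real.norm_of_nonneg (hp c)]
      exact mul_le_mul_of_nonneg_left (herr c τ le_rfl) (hp c)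
    rw [← Finset.sum_mul, hpsum, one_mul] at h1
    have h2 := mul_le_mul_of_nonneg_left h1 hβ1.le
    rw [hs]
    linarith
  have hdesc : ∑ c, p c * Lc c (ωprev + δ)
      ≤ ∑ c, p c * Lc c ωprev + inner ℝ g δ + L / 2 * ‖δ‖ ^ 2 := by
    have h1 : ∑ c, p c * Lc c (ωprev + δ) ≤ ∑ c, p c * (Lc c ωprev
        + inner ℝ (gradient (Lc c) ωprev) δ + L / 2 * ‖δ‖ ^ 2) :=
      Finset.sum_le_sum fun c _ => mul_le_mul_of_nonneg_left
        (fedema_descent_aux (Lc c) (hdiff c) L ωprev δ (hLip c)) (hp c)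
    refine h1.trans (le_of_eq ?_)
    simp only [mul_add, Finset.sum_add_distrib]
    rw [← Finset.sum_mul, hpsum, one_mul, hg, sum_inner]
    simp only [real_inner_smul_left]
  have hsq : ‖δ + s • g‖ ^ 2 ≤ (s * D) ^ 2 := by
    have := norm_nonneg (δ + s • g)
    gcongr
  rw [norm_add_sq_real, real_inner_smul_right, norm_smul, Real.norm_of_nonneg hs0.le,
    real_inner_comm] at hsq
  have hLs : s * L * ‖δ‖ ^ 2 ≤ 1 * ‖δ‖ ^ 2 := by gcongr
  have hfin : inner ℝ g δ + L / 2 * ‖δ‖ ^ 2 ≤ s / 2 * D ^ 2 - s / 2 * ‖g‖ ^ 2 := by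
    refine le_of_mul_le_mul_left ?_ hs0
    linarith
  simp only [hδ]
  linarith
end
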